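/- Let p = 53, u = 2^(−53), and let RN be the symmetric round-to-nearest function with ties-to-even. Set x_h = 844424930131969·2^(−49), x_l = 2^(−53), y_h = −4503599627370499·2^(−53), y_l = 4714705859903487·2^(−152) (all in F_53; they satisfy RN(x_h + x_l) = x_h, RN(y_h + y_l) = y_h, x_h·y_h < 0 and r(x_h, y_h) ≤ 1/2). Then the output of sloppy double-word addition with rounding RN satisfies |z_h + z_l − S| > 2.99·u²·|S|, where S = x_h + x_l + y_h + y_l; hence the relative error bound 3u² for sloppy addition under moderate cancellation is tight. -/

import Mathlib

/-!
Write `u = 2 ^ (-p)`. The example is the case `p = 53` of the inputs `x_h = 3/2 + 16u`, `x_l = u`,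
`y_h = -(1/2 + 3u)`, `y_l = (67 - 128u)u²`, which can be traced for every `p ≥ 8`. The high parts
contribute no error: `s_h + s_l = x_h + y_h`. On the low parts, `v` rounds `x_l + y_l` from
`u + (67 - 128u)u²` down to `u + 66u²`, almost half an ulp, and `w` rounds `2u + 66u²`, a tie, down
to `2u + 64u²`, exactly half an ulp. The two errors add up to `(3 - 128u)u²`. The last three
operations lose nothing: `z_h + z_l = s_h + w`. As the exact sum `S = 1 + 14u + (67 - 128u)u²` is
close to `1`, the relative error is close to `3u²`.
-/

/-- The radix-2, precision-`p` floating-point numbers with unlimited exponent range. -/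
def Fp (p : ℕ) : Set ℝ := {x : ℝ | ∃ M e : ℤ, |M| ≤ 2 ^ p - 1 ∧ x = (M : ℝ) * (2 : ℝ) ^ e}

/-- Round toward `-∞`: the largest floating-point number `≤ x`. -/
noncomputable def RD (p : ℕ) (x : ℝ) : ℝ := sSup {f : ℝ | f ∈ Fp p ∧ f ≤ x}

/-- Round toward `+∞`: the smallest floating-point number `≥ x`. -/
noncomputable def RU (p : ℕ) (x : ℝ) : ℝ := sInf {f : ℝ | f ∈ Fp p ∧ x ≤ f}

/-- `y` is a faithful rounding of `x`. -/
def Faithful (p : ℕ) (x y : ℝ) : Prop := y = RD p x ∨ y = RU p x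

/-- `RN` is a round-to-nearest function for precision `p`. -/
def IsRN (p : ℕ) (RN : ℝ → ℝ) : Prop :=
  (∀ x : ℝ, RN x ∈ Fp p) ∧ ∀ x f : ℝ, f ∈ Fp p → |RN x - x| ≤ |f - x|

/-- `RN` is symmetric. -/
def SymRN (RN : ℝ → ℝ) : Prop := ∀ x : ℝ, RN (-x) = -RN x

/-- A nonzero `f ∈ F_p` is *even* if `f · 2^(-e_f)` is an even integer, where
`e_f = ⌊log₂ |f|⌋ - p + 1`; `0` is even. -/
def FpEven (p : ℕ) (f : ℝ) : Prop :=
  f = 0 ∨ ∃ m : ℤ, Even m ∧ f = (m : ℝ) * (2 : ℝ) ^ (Int.log 2 |f| - (p : ℤ) + 1)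

/-- `RN` breaks ties to even. -/
def TiesToEven (p : ℕ) (RN : ℝ → ℝ) : Prop :=
  ∀ x : ℝ, RD p x ≠ RU p x → |x - RD p x| = |RU p x - x| →
    (RN x = RD p x ∨ RN x = RU p x) ∧ FpEven p (RN x)

/-- `RN` breaks ties away from zero. -/
def TiesToAway (p : ℕ) (RN : ℝ → ℝ) : Prop :=
  ∀ x : ℝ, RD p x ≠ RU p x → |x - RD p x| = |RU p x - x| →
    (RN x = RD p x ∨ RN x = RU p x) ∧ |RN x| = max |RD p x| |RU p x|

/-- `r(x,y)`: the extent of cancellation when adding `x` and `y`. -/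
noncomputable def cancelRatio (x y : ℝ) : ℝ :=
  if x * y < 0 then min |x| |y| / max |x| |y| else 0

/-- Sloppy double-word addition with rounding function `R`. -/
noncomputable def sloppyAdd (R : ℝ → ℝ) (xh xl yh yl : ℝ) : ℝ × ℝ :=
  let sh := R (xh + yh)
  let a' := R (sh - yh)
  let b' := R (sh - a')
  let sl := R (R (xh - a') + R (yh - b'))
  let v := R (xl + yl)
  let w := R (sl + v)
  let zh := R (sh + w)
  let d := R (zh - sh)
  let zl := R (w - d)
  (zh, zl)

section FloatingPoint

variable {p : ℕ} {x f : ℝ} {c k q : ℤ}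

lemma intCast_mul_zpow_mem_Fp (hp : p ≠ 0) (hc : |c| ≤ 2 ^ p) (q : ℤ) :
    (c : ℝ) * 2 ^ q ∈ Fp p := by
  rcases hc.lt_or_eq with hlt | heq
  · exact ⟨c, q, Int.le_sub_one_of_lt hlt, rfl⟩
  · have hone : (1 : ℤ) ≤ 2 ^ p - 1 := by
      have := pow_le_pow_right₀ (one_le_two : (1 : ℤ) ≤ 2) (Nat.one_le_iff_ne_zero.2 hp)
      lia
    have hpow : (2 : ℝ) ^ (p + q : ℤ) = 2 ^ p * 2 ^ q := by
      rw [zpow_add₀ two_ne_zero, zpow_natCast]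
    rcases eq_or_eq_neg_of_abs_eq heq with rfl | rfl
    · exact ⟨1, p + q, by simpa using hone, by rw [hpow]; push_cast; ring⟩
    · exact ⟨-1, p + q, by simpa using hone, by rw [hpow]; push_cast; ring⟩

-- `(2 ^ p - 1) * 2 ^ (q - 1)` is the largest number representable with an exponent below `q`.
lemma exists_eq_intCast_mul_zpow_of_mem_Fp (hf : f ∈ Fp p)
    (hlarge : (2 ^ p - 1) * 2 ^ q < 2 * |f|) : ∃ n : ℤ, f = n * 2 ^ q := by
  obtain ⟨M, e, hM, rfl⟩ := hf
  rcases le_or_gt q e with hqe | heq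
  · obtain ⟨n, rfl⟩ := Int.le.dest hqe
    refine ⟨M * 2 ^ n, ?_⟩
    rw [zpow_add₀ two_ne_zero, zpow_natCast]
    push_cast
    ring
  · refine absurd hlarge (not_lt.2 ?_)
    have hM' : |(M : ℝ)| ≤ 2 ^ p - 1 := by exact_mod_cast hM
    have he : (2 : ℝ) * 2 ^ e ≤ 2 ^ q := by
      rw [← zpow_one_add₀ two_ne_zero]
      exact zpow_le_zpow_right₀ one_le_two (by lia)
    calc 2 * |(M : ℝ) * 2 ^ e| = |(M : ℝ)| * (2 * 2 ^ e) := by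
          rw [abs_mul, abs_of_pos (zpow_pos two_pos e : (0 : ℝ) < 2 ^ e)]; ring
      _ ≤ (2 ^ p - 1) * 2 ^ q := by gcongr; exact (abs_nonneg _).trans hM'

lemma eq_of_mem_Fp_of_abs_sub_lt (hc : 2 ^ p < 2 * |c|) (hf : f ∈ Fp p)
    (h : |f - c * 2 ^ q| < 2 ^ q) : f = c * 2 ^ q := by
  have hq : (0 : ℝ) < 2 ^ q := zpow_pos two_pos q
  have hc' : (2 : ℝ) ^ p + 1 ≤ 2 * |(c : ℝ)| := by exact_mod_cast hc
  obtain ⟨n, rfl⟩ := exists_eq_intCast_mul_zpow_of_mem_Fp (q := q) hf <| by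
    have htri := abs_sub_abs_le_abs_sub ((c : ℝ) * 2 ^ q) f
    rw [abs_sub_comm _ f, abs_mul, abs_of_pos hq] at htri
    nlinarith
  rw [← sub_mul, abs_mul, abs_of_pos hq, mul_lt_iff_lt_one_left hq] at h
  have hnc : |n - c| < 1 := by exact_mod_cast h
  rw [sub_eq_zero.1 (Int.abs_lt_one_iff.1 hnc)]

lemma le_or_add_one_mul_zpow_le_of_mem_Fp (hk : 2 ^ p ≤ 2 * k) (hf : f ∈ Fp p) :
    f ≤ k * 2 ^ q ∨ (k + 1) * 2 ^ q ≤ f := by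
  by_contra! ⟨hlt, hlt'⟩
  have hq : (0 : ℝ) < 2 ^ q := zpow_pos two_pos q
  have hk' : (2 : ℝ) ^ p ≤ 2 * k := by exact_mod_cast hk
  obtain ⟨n, rfl⟩ := exists_eq_intCast_mul_zpow_of_mem_Fp (q := q) hf <| by
    nlinarith [le_abs_self f]
  have hkn : k < n := by exact_mod_cast lt_of_mul_lt_mul_right hlt hq.le
  have hnk : n < k + 1 := by exact_mod_cast lt_of_mul_lt_mul_right hlt' hq.le
  lia

lemma ne_zero_of_two_pow_le_two_mul (hk : 2 ^ p ≤ 2 * k) (hk' : k < 2 ^ p) : p ≠ 0 := by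
  rintro rfl
  lia

lemma RD_eq_mul_zpow (hk : 2 ^ p ≤ 2 * k) (hk' : k < 2 ^ p) (hle : k * 2 ^ q ≤ x)
    (hlt : x < (k + 1) * 2 ^ q) : RD p x = k * 2 ^ q := by
  have hp := ne_zero_of_two_pow_le_two_mul hk hk'
  refine IsGreatest.csSup_eq
    ⟨⟨intCast_mul_zpow_mem_Fp hp (abs_le.2 ⟨by lia, hk'.le⟩) q, hle⟩, fun f ⟨hf, hfx⟩ ↦ ?_⟩
  exact (le_or_add_one_mul_zpow_le_of_mem_Fp hk hf).resolve_right (hfx.trans_lt hlt).not_ge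

lemma RU_eq_add_one_mul_zpow (hk : 2 ^ p ≤ 2 * k) (hk' : k < 2 ^ p) (hlt : k * 2 ^ q < x)
    (hle : x ≤ (k + 1) * 2 ^ q) : RU p x = (k + 1) * 2 ^ q := by
  have hp := ne_zero_of_two_pow_le_two_mul hk hk'
  have hmem := intCast_mul_zpow_mem_Fp (c := k + 1) hp (abs_le.2 ⟨by lia, hk'⟩) q
  push_cast at hmem
  refine IsLeast.csInf_eq ⟨⟨hmem, hle⟩, fun f ⟨hf, hxf⟩ ↦ ?_⟩
  exact (le_or_add_one_mul_zpow_le_of_mem_Fp hk hf).resolve_left (hlt.trans_le hxf).not_ge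

lemma log_abs_mul_zpow (hk : 2 ^ p ≤ 2 * k) (hk' : k < 2 ^ p) :
    Int.log 2 |(k : ℝ) * 2 ^ q| = q + p - 1 := by
  have hq : (0 : ℝ) < 2 ^ q := zpow_pos two_pos q
  have hkR : (2 : ℝ) ^ p ≤ 2 * k := by exact_mod_cast hk
  have hkR' : (k : ℝ) < 2 ^ p := by exact_mod_cast hk'
  have hpow : (2 : ℝ) ^ (q + p) = 2 ^ p * 2 ^ q := by
    rw [zpow_add₀ two_ne_zero, zpow_natCast, mul_comm]
  have hpos : (0 : ℝ) < k * 2 ^ q := by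
    have := pow_pos (two_pos (α := ℝ)) p
    exact mul_pos (by linarith) hq
  rw [abs_of_pos hpos]
  apply le_antisymm
  · rw [Int.le_sub_one_iff, ← Int.lt_zpow_iff_log_lt one_lt_two hpos, Nat.cast_ofNat, hpow]
    gcongr
  · rw [← Int.zpow_le_iff_le_log one_lt_two hpos, Nat.cast_ofNat, zpow_sub_one₀ two_ne_zero, hpow]
    nlinarith

lemma FpEven.even_of_mul_zpow (h : FpEven p (k * 2 ^ q)) (hk : 2 ^ p ≤ 2 * k) (hk' : k < 2 ^ p) :
    Even k := by
  have hq : (2 : ℝ) ^ q ≠ 0 := zpow_ne_zero q two_ne_zero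
  rcases h with h | ⟨m, hm, h⟩
  · have hk0 : k = 0 := by exact_mod_cast (mul_eq_zero.1 h).resolve_right hq
    exact hk0 ▸ Even.zero
  · rw [log_abs_mul_zpow hk hk', show q + p - 1 - p + 1 = q by ring] at h
    have hkm : k = m := by exact_mod_cast mul_right_cancel₀ hq h
    exact hkm ▸ hm

end FloatingPoint

section RoundToNearest

variable {p : ℕ} {RN : ℝ → ℝ} {x f : ℝ} {c k q : ℤ}

lemma IsRN.apply_of_mem (hRN : IsRN p RN) (hx : x ∈ Fp p) : RN x = x := by
  simpa [sub_eq_zero] using hRN.2 x x hx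

lemma IsRN.apply_eq_of_eq_of_mem (hRN : IsRN p RN) (h : x = f) (hf : f ∈ Fp p) : RN x = f := by
  rw [h, hRN.apply_of_mem hf]

lemma IsRN.apply_eq_of_abs_sub_lt (hRN : IsRN p RN) (hc : 2 ^ p < 2 * |c|) (hc' : |c| < 2 ^ p)
    (hf : f = c * 2 ^ q) (h : |x - f| < 2 ^ q / 2) : RN x = f := by
  subst hf
  have hp : p ≠ 0 := by
    rintro rfl
    lia
  have hnear := hRN.2 x _ (intCast_mul_zpow_mem_Fp hp hc'.le q)
  rw [abs_sub_comm ((c : ℝ) * 2 ^ q) x] at hnear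
  refine eq_of_mem_Fp_of_abs_sub_lt hc (hRN.1 x) ?_
  calc |RN x - c * 2 ^ q| ≤ |RN x - x| + |x - c * 2 ^ q| := abs_sub_le _ _ _
    _ < 2 ^ q := by linarith

lemma TiesToEven.apply_midpoint (hties : TiesToEven p RN) (hk : 2 ^ p ≤ 2 * k) (hk' : k < 2 ^ p)
    (hx : x = (k + 1 / 2) * 2 ^ q) :
    (RN x = k * 2 ^ q ∨ RN x = (k + 1) * 2 ^ q) ∧ FpEven p (RN x) := by
  have hq : (0 : ℝ) < 2 ^ q := zpow_pos two_pos q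
  have hRD : RD p x = k * 2 ^ q := RD_eq_mul_zpow hk hk' (by linarith) (by linarith)
  have hRU : RU p x = (k + 1) * 2 ^ q :=
    RU_eq_add_one_mul_zpow hk hk' (by linarith) (by linarith)
  have h := hties x (by rw [hRD, hRU]; intro h; linarith)
    (by rw [hRD, hRU, hx]; congr 1; ring)
  rwa [hRD, hRU] at h

lemma TiesToEven.apply_midpoint_of_even (hties : TiesToEven p RN) (hk : 2 ^ p ≤ 2 * k)
    (hk' : k < 2 ^ p) (heven : Even k) (hx : x = (k + 1 / 2) * 2 ^ q) (hf : f = k * 2 ^ q) :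
    RN x = f := by
  subst hf
  obtain ⟨hor, hRNeven⟩ := hties.apply_midpoint hk hk' hx
  refine hor.resolve_right fun h ↦ ?_
  rw [h] at hRNeven
  have hpow : Even ((2 : ℤ) ^ p) := even_two.pow_of_ne_zero (ne_zero_of_two_pow_le_two_mul hk hk')
  have hsucc : Even (k + 1) :=
    FpEven.even_of_mul_zpow (q := q) (by exact_mod_cast hRNeven) (by lia) (by grind)
  grind

lemma TiesToEven.apply_midpoint_of_odd (hties : TiesToEven p RN) (hk : 2 ^ p ≤ 2 * k)
    (hk' : k < 2 ^ p) (hodd : Odd k) (hx : x = (k + 1 / 2) * 2 ^ q)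
    (hf : f = (k + 1) * 2 ^ q) : RN x = f := by
  subst hf
  obtain ⟨hor, hRNeven⟩ := hties.apply_midpoint hk hk' hx
  refine hor.resolve_left fun h ↦ ?_
  rw [h] at hRNeven
  exact Int.not_even_iff_odd.2 hodd (hRNeven.even_of_mul_zpow hk hk')

end RoundToNearest

section Example

variable {p : ℕ} {RN : ℝ → ℝ} {x u : ℝ} {c N : ℤ}

lemma two_zpow_sub_mul_eq_mul_pow (hu : u = 2 ^ (-(p : ℤ))) (a : ℤ) (b : ℕ) :
    (2 : ℝ) ^ (a - b * p) = 2 ^ a * u ^ b := by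
  rw [hu, ← zpow_natCast, ← zpow_mul, ← zpow_add₀ two_ne_zero]
  congr 1
  ring

lemma mem_Fp_of_eq_mul_pow (hp : p ≠ 0) (hu : u = 2 ^ (-(p : ℤ))) (hc : |c| ≤ 2 ^ p) (a : ℤ)
    (b : ℕ) (hx : x = c * (2 ^ a * u ^ b)) : x ∈ Fp p := by
  rw [hx, ← two_zpow_sub_mul_eq_mul_pow hu]
  exact intCast_mul_zpow_mem_Fp hp hc _

lemma intCast_mul_eq_one (hu : u = 2 ^ (-(p : ℤ))) (hN : (2 : ℤ) ^ p = 128 * N) :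
    128 * N * u = 1 := by
  have hN' : (2 : ℝ) ^ p = 128 * N := by exact_mod_cast hN
  rw [hu, zpow_neg, zpow_natCast, ← hN', mul_inv_cancel₀ (by positivity)]

lemma pos_and_le_of_intCast_mul_eq_one (hN : 2 ≤ N) (hNu : 128 * N * u = 1) :
    0 < u ∧ u ≤ 1 / 256 := by
  have hN' : (2 : ℝ) ≤ N := by exact_mod_cast hN
  have hu : 0 < u := by
    by_contra! h
    nlinarith
  exact ⟨hu, by nlinarith⟩

section Trace

-- `N = 2 ^ (p - 7)`; with it, side conditions on significands are linear arithmetic.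
variable (hu : u = 2 ^ (-(p : ℤ))) (hN : (2 : ℤ) ^ p = 128 * N) (hN2 : 2 ≤ N)

include hu hN hN2

lemma TiesToEven.apply_three_halves_add_seventeen_mul (hties : TiesToEven p RN) :
    RN (3 / 2 + 17 * u) = 3 / 2 + 16 * u := by
  have hNu := intCast_mul_eq_one hu hN
  refine hties.apply_midpoint_of_even (k := 96 * N + 8) (q := 1 - (1 : ℕ) * p) (by lia) (by lia)
    (by grind) ?_ ?_ <;>
  · rw [two_zpow_sub_mul_eq_mul_pow hu]
    push_cast
    linear_combination -(3 / 2) * hNu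

lemma TiesToEven.apply_three_halves_add_fifteen_mul (hties : TiesToEven p RN) :
    RN (3 / 2 + 15 * u) = 3 / 2 + 16 * u := by
  have hNu := intCast_mul_eq_one hu hN
  refine hties.apply_midpoint_of_odd (k := 96 * N + 7) (q := 1 - (1 : ℕ) * p) (by lia) (by lia)
    (by grind) ?_ ?_ <;>
  · rw [two_zpow_sub_mul_eq_mul_pow hu]
    push_cast
    linear_combination -(3 / 2) * hNu

lemma TiesToEven.apply_one_add_thirteen_mul (hties : TiesToEven p RN) :
    RN (1 + 13 * u) = 1 + 12 * u := by
  have hNu := intCast_mul_eq_one hu hN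
  refine hties.apply_midpoint_of_even (k := 64 * N + 6) (q := 1 - (1 : ℕ) * p) (by lia) (by lia)
    (by grind) ?_ ?_ <;>
  · rw [two_zpow_sub_mul_eq_mul_pow hu]
    push_cast
    linear_combination -hNu

lemma TiesToEven.apply_two_mul_add_sixty_six_mul_sq (hties : TiesToEven p RN) :
    RN (2 * u + 66 * u ^ 2) = 2 * u + 64 * u ^ 2 := by
  have hNu := intCast_mul_eq_one hu hN
  refine hties.apply_midpoint_of_even (k := 64 * N + 16) (q := 2 - (2 : ℕ) * p) (by lia) (by lia)
    (by grind) ?_ ?_ <;>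
  · rw [two_zpow_sub_mul_eq_mul_pow hu]
    push_cast
    linear_combination -(2 * u) * hNu

lemma IsRN.apply_neg_half_add_three_mul_add (hRN : IsRN p RN) :
    RN (-(1 / 2 + 3 * u) + (67 - 128 * u) * u ^ 2) = -(1 / 2 + 3 * u) := by
  have hNu := intCast_mul_eq_one hu hN
  obtain ⟨hu0, hu1⟩ := pos_and_le_of_intCast_mul_eq_one hN2 hNu
  refine hRN.apply_eq_of_abs_sub_lt (c := -(64 * N + 3)) (q := 0 - (1 : ℕ) * p) ?_ ?_ ?_ ?_
  · grind
  · grind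
  · rw [two_zpow_sub_mul_eq_mul_pow hu]
    push_cast
    linear_combination (1 / 2) * hNu
  · rw [two_zpow_sub_mul_eq_mul_pow hu, add_sub_cancel_left, zpow_zero, pow_one, one_mul,
      abs_of_pos (by nlinarith [sq_pos_of_pos hu0])]
    nlinarith [sq_pos_of_pos hu0]

lemma IsRN.apply_add_sixty_seven_sub_mul_sq (hRN : IsRN p RN) :
    RN (u + (67 - 128 * u) * u ^ 2) = u + 66 * u ^ 2 := by
  have hNu := intCast_mul_eq_one hu hN
  obtain ⟨hu0, hu1⟩ := pos_and_le_of_intCast_mul_eq_one hN2 hNu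
  refine hRN.apply_eq_of_abs_sub_lt (c := 64 * N + 33) (q := 1 - (2 : ℕ) * p) ?_ ?_ ?_ ?_
  · grind
  · grind
  · rw [two_zpow_sub_mul_eq_mul_pow hu]
    push_cast
    linear_combination -u * hNu
  · rw [two_zpow_sub_mul_eq_mul_pow hu, zpow_one, abs_lt]
    constructor <;> nlinarith [pow_pos hu0 2, pow_pos hu0 3]

lemma IsRN.apply_one_add_fourteen_mul_add (hRN : IsRN p RN) :
    RN (1 + 14 * u + 64 * u ^ 2) = 1 + 14 * u := by
  have hNu := intCast_mul_eq_one hu hN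
  obtain ⟨hu0, hu1⟩ := pos_and_le_of_intCast_mul_eq_one hN2 hNu
  refine hRN.apply_eq_of_abs_sub_lt (c := 64 * N + 7) (q := 1 - (1 : ℕ) * p) ?_ ?_ ?_ ?_
  · grind
  · grind
  · rw [two_zpow_sub_mul_eq_mul_pow hu]
    push_cast
    linear_combination -hNu
  · rw [two_zpow_sub_mul_eq_mul_pow hu, add_sub_cancel_left, zpow_one, pow_one,
      abs_of_pos (by positivity)]
    nlinarith

lemma sloppyAdd_three_halves_add_eq (hRN : IsRN p RN) (hties : TiesToEven p RN) :
    sloppyAdd RN (3 / 2 + 16 * u) u (-(1 / 2 + 3 * u)) ((67 - 128 * u) * u ^ 2) =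
      (1 + 14 * u, 64 * u ^ 2) := by
  have hp : p ≠ 0 := by
    rintro rfl
    lia
  have hsh : RN (3 / 2 + 16 * u + -(1 / 2 + 3 * u)) = 1 + 12 * u :=
    (congrArg RN (by ring)).trans (hties.apply_one_add_thirteen_mul hu hN hN2)
  have ha' : RN (1 + 12 * u - -(1 / 2 + 3 * u)) = 3 / 2 + 16 * u :=
    (congrArg RN (by ring)).trans (hties.apply_three_halves_add_fifteen_mul hu hN hN2)
  have hb' : RN (1 + 12 * u - (3 / 2 + 16 * u)) = -(1 / 2 + 4 * u) := by
    refine hRN.apply_eq_of_eq_of_mem (by ring)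
      (mem_Fp_of_eq_mul_pow (c := -(64 * N + 4)) hp hu (by grind) 0 1 ?_)
    push_cast
    linear_combination (1 / 2) * intCast_mul_eq_one hu hN
  have hδx : RN (3 / 2 + 16 * u - (3 / 2 + 16 * u)) = 0 :=
    hRN.apply_eq_of_eq_of_mem (by ring)
      (mem_Fp_of_eq_mul_pow (c := 0) hp hu (by simp) 0 0 (by simp))
  have hu_mem : u ∈ Fp p := mem_Fp_of_eq_mul_pow (c := 1) hp hu (by grind) 0 1 (by simp)
  have hδy : RN (-(1 / 2 + 3 * u) - -(1 / 2 + 4 * u)) = u :=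
    hRN.apply_eq_of_eq_of_mem (by ring) hu_mem
  have hsl : RN (0 + u) = u := hRN.apply_eq_of_eq_of_mem (by ring) hu_mem
  have hv := hRN.apply_add_sixty_seven_sub_mul_sq hu hN hN2
  have hw : RN (u + (u + 66 * u ^ 2)) = 2 * u + 64 * u ^ 2 :=
    (congrArg RN (by ring)).trans (hties.apply_two_mul_add_sixty_six_mul_sq hu hN hN2)
  have hzh : RN (1 + 12 * u + (2 * u + 64 * u ^ 2)) = 1 + 14 * u :=
    (congrArg RN (by ring)).trans (hRN.apply_one_add_fourteen_mul_add hu hN hN2)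
  have hd : RN (1 + 14 * u - (1 + 12 * u)) = 2 * u :=
    hRN.apply_eq_of_eq_of_mem (by ring)
      (mem_Fp_of_eq_mul_pow (c := 1) hp hu (by grind) 1 1 (by simp))
  have hzl : RN (2 * u + 64 * u ^ 2 - 2 * u) = 64 * u ^ 2 :=
    hRN.apply_eq_of_eq_of_mem (by ring)
      (mem_Fp_of_eq_mul_pow (c := 1) hp hu (by grind) 6 2 (by norm_num))
  simp only [sloppyAdd, hsh, ha', hb', hδx, hδy, hsl, hv, hw, hzh, hd, hzl]

end Trace

lemma cancelRatio_three_halves_add_le (hu0 : 0 < u) :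
    cancelRatio (3 / 2 + 16 * u) (-(1 / 2 + 3 * u)) ≤ 1 / 2 := by
  rw [cancelRatio, if_pos (mul_neg_of_pos_of_neg (by positivity) (by linarith)), abs_neg,
    abs_of_pos (by positivity), abs_of_pos (by positivity), min_eq_right (by linarith),
    max_eq_left (by linarith), div_le_div_iff₀ (by positivity) two_pos]
  linarith

lemma three_sub_mul_sq_mul_abs_lt_abs_sub (hu0 : 0 < u) (hu1 : u ≤ 1 / 256) :
    (3 - 256 * u) * u ^ 2 *
        |3 / 2 + 16 * u + u + -(1 / 2 + 3 * u) + (67 - 128 * u) * u ^ 2| <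
      |1 + 14 * u + 64 * u ^ 2 -
        (3 / 2 + 16 * u + u + -(1 / 2 + 3 * u) + (67 - 128 * u) * u ^ 2)| := by
  have hS : |3 / 2 + 16 * u + u + -(1 / 2 + 3 * u) + (67 - 128 * u) * u ^ 2| ≤ 1 + 15 * u := by
    rw [abs_of_pos] <;> nlinarith [pow_pos hu0 2, pow_pos hu0 3]
  calc _ ≤ (3 - 256 * u) * u ^ 2 * (1 + 15 * u) :=
        mul_le_mul_of_nonneg_left hS (mul_nonneg (by linarith) (by positivity))
    _ = (3 - 211 * u - 3840 * u ^ 2) * u ^ 2 := by ring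
    _ < (3 - 128 * u) * u ^ 2 :=
        mul_lt_mul_of_pos_right (by nlinarith) (by positivity)
    _ = |-((3 - 128 * u) * u ^ 2)| := by
        rw [abs_neg, abs_of_pos (mul_pos (by linarith) (by positivity))]
    _ = _ := by
        congr 1
        ring

theorem sloppy_three_u_sq_bound_is_tight_general (hp : 8 ≤ p) (hu : u = 2 ^ (-(p : ℤ)))
    (hRN : IsRN p RN) (hties : TiesToEven p RN) {xh xl yh yl : ℝ} (hxh : xh = 3 / 2 + 16 * u)
    (hxl : xl = u) (hyh : yh = -(1 / 2 + 3 * u)) (hyl : yl = (67 - 128 * u) * u ^ 2) :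
    xh ∈ Fp p ∧ xl ∈ Fp p ∧ yh ∈ Fp p ∧ yl ∈ Fp p ∧
      RN (xh + xl) = xh ∧ RN (yh + yl) = yh ∧ xh * yh < 0 ∧
      cancelRatio xh yh ≤ 1 / 2 ∧
      |(sloppyAdd RN xh xl yh yl).1 + (sloppyAdd RN xh xl yh yl).2 -
          (xh + xl + yh + yl)| >
        (3 - 256 * u) * u ^ 2 * |xh + xl + yh + yl| := by
  obtain ⟨N, hN⟩ : (128 : ℤ) ∣ 2 ^ p := pow_dvd_pow 2 (by lia : 7 ≤ p)
  have hN2 : 2 ≤ N := by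
    have : (2 : ℤ) ^ 8 ≤ 2 ^ p := pow_le_pow_right₀ one_le_two hp
    lia
  have hp0 : p ≠ 0 := by lia
  have hNu := intCast_mul_eq_one hu hN
  obtain ⟨hu0, hu1⟩ := pos_and_le_of_intCast_mul_eq_one hN2 hNu
  rw [hxh, hxl, hyh, hyl, sloppyAdd_three_halves_add_eq hu hN hN2 hRN hties]
  refine ⟨mem_Fp_of_eq_mul_pow (c := 96 * N + 8) hp0 hu (by grind) 1 1 ?_,
    mem_Fp_of_eq_mul_pow (c := 1) hp0 hu (by grind) 0 1 (by simp),
    mem_Fp_of_eq_mul_pow (c := -(64 * N + 3)) hp0 hu (by grind) 0 1 ?_,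
    mem_Fp_of_eq_mul_pow (c := 67 * N - 1) hp0 hu (by grind) 7 3 ?_,
    ?_, hRN.apply_neg_half_add_three_mul_add hu hN hN2,
    mul_neg_of_pos_of_neg (by positivity) (by linarith), cancelRatio_three_halves_add_le hu0,
    three_sub_mul_sq_mul_abs_lt_abs_sub hu0 hu1⟩
  · push_cast
    linear_combination -(3 / 2) * hNu
  · push_cast
    linear_combination (1 / 2) * hNu
  · push_cast
    linear_combination -67 * u ^ 2 * hNu
  · exact (congrArg RN (by ring)).trans (hties.apply_three_halves_add_seventeen_mul hu hN hN2)

end Example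

theorem sloppy_three_u_sq_bound_is_tight
    (RN : ℝ → ℝ) (hRN : IsRN 53 RN) (hsym : SymRN RN) (hties : TiesToEven 53 RN)
    (xh xl yh yl : ℝ)
    (hxh : xh = (844424930131969 : ℝ) * (2 : ℝ) ^ (-49 : ℤ))
    (hxl : xl = (2 : ℝ) ^ (-53 : ℤ))
    (hyh : yh = -(4503599627370499 : ℝ) * (2 : ℝ) ^ (-53 : ℤ))
    (hyl : yl = (4714705859903487 : ℝ) * (2 : ℝ) ^ (-152 : ℤ)) :
    xh ∈ Fp 53 ∧ xl ∈ Fp 53 ∧ yh ∈ Fp 53 ∧ yl ∈ Fp 53 ∧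
      RN (xh + xl) = xh ∧ RN (yh + yl) = yh ∧ xh * yh < 0 ∧
      cancelRatio xh yh ≤ 1 / 2 ∧
      |(sloppyAdd RN xh xl yh yl).1 + (sloppyAdd RN xh xl yh yl).2 -
          (xh + xl + yh + yl)| >
        2.99 * ((2 : ℝ) ^ (-53 : ℤ)) ^ 2 * |xh + xl + yh + yl| := by
  obtain ⟨hxhm, hxlm, hyhm, hylm, hx, hy, hneg, hratio, hlt⟩ :=
    sloppy_three_u_sq_bound_is_tight_general (by lia) rfl hRN hties (xh := xh) (xl := xl)
      (yh := yh) (yl := yl) (by norm_num [hxh]) hxl (by norm_num [hyh]) (by norm_num [hyl])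
  exact ⟨hxhm, hxlm, hyhm, hylm, hx, hy, hneg, hratio,
    hlt.trans_le' (mul_le_mul_of_nonneg_right (by norm_num) (abs_nonneg _))⟩
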